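/- Let n ≥ 4096. Among all simple graphs on n vertices containing no 2 pairwise edge-disjoint cycles (i.e., with φ ≤ 1), the graph K1∇(K₃ ∪ (n−4)K₁), obtained by joining a new vertex to the disjoint union of a triangle and n−4 isolated vertices, is the unique graph (up to isomorphism) maximizing the spectral radius of the adjacency matrix. -/

import Mathlib

open scoped Classical

namespace PaperEDC

/-- `G` contains `m` pairwise edge-disjoint cycles. -/
def HasEDC {V : Type*} (G : SimpleGraph V) (m : ℕ) : Prop :=
  ∃ c : Fin m → Σ v : V, G.Walk v v,
    (∀ i, (c i).2.IsCycle) ∧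
    ∀ i j, i ≠ j → ∀ e ∈ (c i).2.edges, e ∉ (c j).2.edges

/-- `φ(G)`: the maximum number of pairwise edge-disjoint cycles in `G`. -/
noncomputable def phi {V : Type*} (G : SimpleGraph V) : ℕ := sSup {m | HasEDC G m}

/-- `K₁ ∇ H`: the join of a single new vertex with `H`. -/
def joinK1 {V : Type*} (H : SimpleGraph V) : SimpleGraph (Option V) :=
  SimpleGraph.fromRel fun a b => a = none ∨ ∃ u v, a = some u ∧ b = some v ∧ H.Adj u v

/-- `t(G)`: the number of triangles of `G`. -/
noncomputable def triCount {V : Type*} (G : SimpleGraph V) : ℕ :=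
  Nat.card {s : Finset V // G.IsNClique 3 s}

/-- A triangle-cactus: a connected graph in which every edge lies on a cycle and every
cycle is a triangle. -/
def IsTriangleCactus {V : Type*} (G : SimpleGraph V) : Prop :=
  G.Connected ∧
  (∀ e ∈ G.edgeSet, ∃ (v : V) (w : G.Walk v v), w.IsCycle ∧ e ∈ w.edges) ∧
  ∀ (v : V) (w : G.Walk v v), w.IsCycle → w.length = 3

/-- `e(G)`: the number of edges of `G`. -/
noncomputable def ecard {V : Type*} (G : SimpleGraph V) : ℕ := Nat.card G.edgeSet

/-- `ρ(G)`: the spectral radius (largest adjacency eigenvalue) of `G`. -/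
noncomputable def specRad {V : Type*} [Fintype V] (G : SimpleGraph V) : ℝ :=
  sSup {x : ℝ | ∃ f : V → ℝ, f ≠ 0 ∧ ∀ v : V, ∑ u : V, (if G.Adj v u then f u else 0) = x * f v}

/-- The disjoint union `K₃ ∪ (m-3)K₁`: a triangle on the first three vertices of `Fin m`
together with `m - 3` isolated vertices. -/
def triPlusIsolated (m : ℕ) : SimpleGraph (Fin m) :=
  SimpleGraph.fromRel fun i j => i.val < 3 ∧ j.val < 3

/-!
Let `G` have `n` vertices, no two edge-disjoint cycles, and spectral radius `ρ` at least that of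
`K = K₁ ∇ (K₃ ∪ (n-4)K₁)`; then `ρ ≥ √(n-1)`, because `K` contains a spanning star. Take an
eigenvector for `ρ`, replace it by its absolute value, and scale it so that its largest entry is
`z u = 1`. The absence of two edge-disjoint cycles keeps codegrees below 4, the number of edges
linear, and the link of `u` supported on at most 3 vertices. Counting walks of length two from `u`,
weighted by `z`, then leaves no room for a vertex not adjacent to `u` once `ρ` is large, so `u` is
dominating and `G` lies inside a copy of `K`. By Perron-Frobenius, a proper subgraph of the
connected graph `K` has strictly smaller spectral radius, so `G` is that copy.
-/

open Finset Matrix SimpleGraph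

section SpectralRadius

variable {V W : Type*} [Fintype V] [Fintype W] {G H : SimpleGraph V}

lemma specRad_eq_sSup_spectrum (G : SimpleGraph V) :
    specRad G = sSup (spectrum ℝ (G.adjMatrix ℝ)) := by
  have hsum (f : V → ℝ) (x : ℝ) : G.adjMatrix ℝ *ᵥ f = x • f ↔
      ∀ v, ∑ u, (if G.Adj v u then f u else 0) = x * f v := by
    simp only [funext_iff, adjMatrix_mulVec_apply, neighborFinset_eq_filter, sum_filter,
      Pi.smul_apply, smul_eq_mul]
  unfold specRad
  congr 1
  ext x
  rw [← spectrum_toLin', ← Module.End.hasEigenvalue_iff_mem_spectrum, Set.mem_ofPred_eq]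
  constructor
  · rintro ⟨f, hf, hx⟩
    exact Module.End.hasEigenvalue_of_hasEigenvector
      ⟨Module.End.mem_eigenspace_iff.2 ((hsum f x).2 hx), hf⟩
  · intro hx
    obtain ⟨f, hf⟩ := hx.exists_hasEigenvector
    exact ⟨f, hf.2, (hsum f x).1 hf.apply_eq_smul⟩

lemma specRad_congr {H : SimpleGraph W} (e : G ≃g H) : specRad G = specRad H := by
  rw [specRad_eq_sSup_spectrum, specRad_eq_sSup_spectrum, ← e.reindex_adjMatrix ℝ,
    ← coe_reindexAlgEquiv ℝ ℝ, AlgEquiv.spectrum_eq]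

lemma exists_adjMatrix_mulVec_eq_specRad_smul [Nonempty V] (G : SimpleGraph V) :
    ∃ f : V → ℝ, f ≠ 0 ∧ G.adjMatrix ℝ *ᵥ f = specRad G • f := by
  have hne : (spectrum ℝ (G.adjMatrix ℝ)).Nonempty := by
    rw [(G.isHermitian_adjMatrix ℝ).spectrum_real_eq_range_eigenvalues]
    exact Set.range_nonempty _
  have hmem : specRad G ∈ spectrum ℝ (G.adjMatrix ℝ) :=
    specRad_eq_sSup_spectrum G ▸ hne.csSup_mem finite_real_spectrum
  rw [← spectrum_toLin', ← Module.End.hasEigenvalue_iff_mem_spectrum] at hmem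
  obtain ⟨f, hf⟩ := hmem.exists_hasEigenvector
  exact ⟨f, hf.2, hf.apply_eq_smul⟩

lemma posSemidef_specRad_smul_one_sub_adjMatrix (G : SimpleGraph V) :
    (specRad G • (1 : Matrix V V ℝ) - G.adjMatrix ℝ).PosSemidef := by
  rw [posSemidef_iff_isHermitian_and_spectrum_nonneg]
  refine ⟨(isHermitian_one.smul (.all _)).sub (G.isHermitian_adjMatrix ℝ), ?_⟩
  rw [← Algebra.algebraMap_eq_smul_one, ← spectrum.singleton_sub_eq, Set.singleton_sub]
  rintro _ ⟨x, hx, rfl⟩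
  have hx_le : x ≤ specRad G :=
    specRad_eq_sSup_spectrum G ▸ le_csSup finite_real_spectrum.bddAbove hx
  exact sub_nonneg.2 hx_le

lemma specRad_smul_one_sub_adjMatrix_mulVec (G : SimpleGraph V) (z : V → ℝ) :
    (specRad G • (1 : Matrix V V ℝ) - G.adjMatrix ℝ) *ᵥ z
      = specRad G • z - G.adjMatrix ℝ *ᵥ z := by
  rw [sub_mulVec, smul_mulVec, one_mulVec]

lemma dotProduct_adjMatrix_mulVec_le (G : SimpleGraph V) (z : V → ℝ) :
    z ⬝ᵥ G.adjMatrix ℝ *ᵥ z ≤ specRad G * (z ⬝ᵥ z) := by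
  have h := (posSemidef_specRad_smul_one_sub_adjMatrix G).dotProduct_mulVec_nonneg z
  rw [specRad_smul_one_sub_adjMatrix_mulVec, star_trivial, dotProduct_sub, dotProduct_smul,
    smul_eq_mul] at h
  exact sub_nonneg.1 h

lemma le_specRad_of_smul_le {z : V → ℝ} {ρ : ℝ} (hz : 0 ≤ z) (hz0 : z ≠ 0)
    (h : ρ • z ≤ G.adjMatrix ℝ *ᵥ z) : ρ ≤ specRad G := by
  have hpos : 0 < z ⬝ᵥ z := dotProduct_self_star_pos_iff.2 hz0
  refine le_of_mul_le_mul_right ?_ hpos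
  calc ρ * (z ⬝ᵥ z) = z ⬝ᵥ ρ • z := by rw [dotProduct_smul, smul_eq_mul]
    _ ≤ z ⬝ᵥ G.adjMatrix ℝ *ᵥ z := dotProduct_le_dotProduct_of_nonneg_left h hz
    _ ≤ specRad G * (z ⬝ᵥ z) := dotProduct_adjMatrix_mulVec_le G z

-- Such a `z` is isotropic for the positive semidefinite form `ρ(G) - A(G)`, hence in its kernel.
lemma adjMatrix_mulVec_eq_of_specRad_smul_le {z : V → ℝ} (hz : 0 ≤ z)
    (h : specRad G • z ≤ G.adjMatrix ℝ *ᵥ z) : G.adjMatrix ℝ *ᵥ z = specRad G • z := by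
  have hpsd := posSemidef_specRad_smul_one_sub_adjMatrix G
  have hker := (hpsd.dotProduct_mulVec_zero_iff z).1 <| le_antisymm
    (by
      rw [specRad_smul_one_sub_adjMatrix_mulVec, star_trivial, dotProduct_sub]
      exact sub_nonpos.2 (dotProduct_le_dotProduct_of_nonneg_left h hz))
    (hpsd.dotProduct_mulVec_nonneg z)
  rw [specRad_smul_one_sub_adjMatrix_mulVec] at hker
  exact (sub_eq_zero.1 hker).symm

lemma pos_of_adjMatrix_mulVec_eq_smul (hG : G.Connected) {z : V → ℝ} {ρ : ℝ} (hz : 0 ≤ z)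
    (hz0 : z ≠ 0) (h : G.adjMatrix ℝ *ᵥ z = ρ • z) (v : V) : 0 < z v := by
  have hstep {x y : V} (hxy : G.Adj x y) (hx : z x = 0) : z y = 0 := by
    have hsum : ∑ w ∈ G.neighborFinset x, z w = 0 := by
      simpa [adjMatrix_mulVec_apply, hx] using congrFun h x
    exact (sum_eq_zero_iff_of_nonneg fun w _ ↦ hz w).1 hsum y (by simpa using hxy)
  refine (hz v).lt_of_ne' fun hv ↦ hz0 <| funext fun w ↦ ?_
  obtain ⟨p⟩ := hG v w
  induction p with
  | nil => exact hv
  | cons hadj _ ih => exact ih (hstep hadj hv)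

lemma neighborFinset_mono (hGH : G ≤ H) (v : V) :
    G.neighborFinset v ⊆ H.neighborFinset v :=
  Set.toFinset_mono (neighborSet_mono hGH v)

lemma adjMatrix_mulVec_mono (hGH : G ≤ H) {z : V → ℝ} (hz : 0 ≤ z) :
    G.adjMatrix ℝ *ᵥ z ≤ H.adjMatrix ℝ *ᵥ z := fun v ↦ by
  simp only [adjMatrix_mulVec_apply]
  exact sum_le_sum_of_subset_of_nonneg (neighborFinset_mono hGH v) fun w _ _ ↦ hz w

lemma eq_of_le_of_adjMatrix_mulVec_le (hGH : G ≤ H) {z : V → ℝ} (hz : ∀ v, 0 < z v)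
    (h : H.adjMatrix ℝ *ᵥ z ≤ G.adjMatrix ℝ *ᵥ z) : G = H := by
  refine le_antisymm hGH fun v w hvw ↦ ?_
  by_contra hvw'
  refine (h v).not_gt ?_
  simp only [adjMatrix_mulVec_apply]
  exact sum_lt_sum_of_subset (neighborFinset_mono hGH v) (by simpa using hvw)
    (by simpa using hvw') (hz w) fun x _ _ ↦ (hz x).le

lemma specRad_smul_abs_le {f : V → ℝ} (h : G.adjMatrix ℝ *ᵥ f = specRad G • f) :
    specRad G • |f| ≤ G.adjMatrix ℝ *ᵥ |f| := fun v ↦ by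
  have hv := congrFun h v
  simp only [adjMatrix_mulVec_apply, Pi.smul_apply, smul_eq_mul, Pi.abs_apply] at hv ⊢
  calc specRad G * |f v| ≤ |specRad G * f v| := by
        rw [abs_mul]; gcongr; exact le_abs_self _
    _ = |∑ w ∈ G.neighborFinset v, f w| := by rw [hv]
    _ ≤ ∑ w ∈ G.neighborFinset v, |f w| := abs_sum_le_sum_abs _ _

lemma eq_of_le_of_specRad_le (hH : H.Connected) (hGH : G ≤ H) (h : specRad H ≤ specRad G) :
    G = H := by
  have := hH.nonempty
  obtain ⟨f, hf, hGf⟩ := exists_adjMatrix_mulVec_eq_specRad_smul G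
  have hz : 0 ≤ |f| := abs_nonneg f
  have hHG : specRad H • |f| ≤ G.adjMatrix ℝ *ᵥ |f| :=
    (smul_le_smul_of_nonneg_right h hz).trans (specRad_smul_abs_le hGf)
  have hHf := adjMatrix_mulVec_eq_of_specRad_smul_le hz (hHG.trans (adjMatrix_mulVec_mono hGH hz))
  exact eq_of_le_of_adjMatrix_mulVec_le hGH
    (pos_of_adjMatrix_mulVec_eq_smul hH hz (by simpa using hf) hHf) (hHf.trans_le hHG)

end SpectralRadius

section EdgeDisjointCycles

variable {V W : Type*} {G : SimpleGraph V}

lemma HasEDC.le_phi [Finite V] {m : ℕ} (h : HasEDC G m) : m ≤ phi G := by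
  refine le_csSup ⟨Nat.card (Sym2 V), ?_⟩ h
  rintro k ⟨c, hc, hdisj⟩
  have hne (i : Fin k) : ∃ e, e ∈ (c i).2.edges := by
    refine List.exists_mem_of_length_pos ?_
    rw [Walk.length_edges]
    exact three_pos.trans_le (hc i).three_le_length
  choose e he using hne
  have hinj : Function.Injective e := fun i j hij ↦ by
    by_contra hne
    exact hdisj i j hne (e i) (he i) (hij ▸ he j)
  simpa using Nat.card_le_card_of_injective e hinj

lemma HasEDC.map {H : SimpleGraph W} {m : ℕ} (h : HasEDC G m) (f : G →g H)
    (hf : Function.Injective f) : HasEDC H m := by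
  obtain ⟨c, hc, hdisj⟩ := h
  refine ⟨fun i ↦ ⟨f (c i).1, (c i).2.map f⟩, fun i ↦ (hc i).map hf, fun i j hij ↦ ?_⟩
  simp only [Walk.edges_map, List.mem_map]
  rintro _ ⟨e, he, rfl⟩ ⟨e', he', hee'⟩
  exact hdisj i j hij e he (Sym2.map.injective hf hee' ▸ he')

lemma hasEDC_two {a b : V} {p : G.Walk a a} {q : G.Walk b b} (hp : p.IsCycle) (hq : q.IsCycle)
    (h : p.edges.Disjoint q.edges) : HasEDC G 2 := by
  refine ⟨![⟨a, p⟩, ⟨b, q⟩], ?_, ?_⟩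
  · simpa [Fin.forall_fin_two] using ⟨hp, hq⟩
  · simpa [Fin.forall_fin_two] using ⟨fun _ he he' ↦ h he he', fun _ he he' ↦ h he' he⟩

lemma isCycle_triangle {a b c : V} (hab : G.Adj a b) (hbc : G.Adj b c) (hca : G.Adj c a) :
    (Walk.cons hab (.cons hbc (.cons hca .nil))).IsCycle := by
  have := hab.ne; have := hbc.ne; have := hca.ne
  simp only [Walk.cons_isCycle_iff, Walk.cons_isPath_iff, Walk.IsPath.nil,
    Walk.support_cons, Walk.support_nil, Walk.edges_cons, Walk.edges_nil, List.mem_cons,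
    List.not_mem_nil, Sym2.eq_iff]
  grind

lemma isCycle_quadrilateral {a b c d : V} (hab : G.Adj a b) (hbc : G.Adj b c) (hcd : G.Adj c d)
    (hda : G.Adj d a) (hac : a ≠ c) (hbd : b ≠ d) :
    (Walk.cons hab (.cons hbc (.cons hcd (.cons hda .nil)))).IsCycle := by
  have := hab.ne; have := hbc.ne; have := hcd.ne; have := hda.ne
  simp only [Walk.cons_isCycle_iff, Walk.cons_isPath_iff, Walk.IsPath.nil,
    Walk.support_cons, Walk.support_nil, Walk.edges_cons, Walk.edges_nil, List.mem_cons,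
    List.not_mem_nil, Sym2.eq_iff]
  grind

lemma card_inter_neighborFinset_le_three [Fintype V] (h : ¬ HasEDC G 2) {u w : V} (huw : u ≠ w) :
    #(G.neighborFinset u ∩ G.neighborFinset w) ≤ 3 := by
  by_contra! hcard
  obtain ⟨a, ha, b, hb, c, hc, d, hd, hab, hac, had, hbc, hbd, hcd⟩ := three_lt_card.1 hcard
  simp only [mem_inter, mem_neighborFinset] at ha hb hc hd
  obtain ⟨hua, hwa⟩ := ha
  obtain ⟨hub, hwb⟩ := hb
  obtain ⟨huc, hwc⟩ := hc
  obtain ⟨hud, hwd⟩ := hd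
  refine h (hasEDC_two (isCycle_quadrilateral hua hwa.symm hwb hub.symm huw hab)
    (isCycle_quadrilateral huc hwc.symm hwd hud.symm huw hcd) ?_)
  have := hua.ne; have := hub.ne; have := hwa.ne; have := hwb.ne
  have := huc.ne; have := hud.ne; have := hwc.ne; have := hwd.ne
  simp only [Walk.edges_cons, Walk.edges_nil, List.disjoint_cons_left, List.disjoint_nil_left,
    List.mem_cons, List.not_mem_nil, Sym2.eq_iff]
  grind

/-- The link of `u` in `G`: the graph which `G` induces on the neighbourhood of `u`, as a graph on
all of `V` whose vertices outside that neighbourhood are isolated. -/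
def link (G : SimpleGraph V) (u : V) : SimpleGraph V where
  Adj x y := G.Adj u x ∧ G.Adj u y ∧ G.Adj x y
  symm := ⟨fun _ _ h ↦ ⟨h.2.1, h.1, h.2.2.symm⟩⟩
  loopless := ⟨fun _ h ↦ h.2.2.ne rfl⟩

@[simp] lemma link_adj {u x y : V} : (link G u).Adj x y ↔ G.Adj u x ∧ G.Adj u y ∧ G.Adj x y :=
  Iff.rfl

lemma eq_or_eq_of_link_adj (h : ¬ HasEDC G 2) {u a b c d : V} (hab : (link G u).Adj a b)
    (hcd : (link G u).Adj c d) : a = c ∨ a = d ∨ b = c ∨ b = d := by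
  by_contra hdisj
  obtain ⟨hua, hub, hab⟩ := hab
  obtain ⟨huc, hud, hcd⟩ := hcd
  refine h (hasEDC_two (isCycle_triangle hua hab hub.symm) (isCycle_triangle huc hcd hud.symm) ?_)
  have := hua.ne; have := hub.ne; have := huc.ne; have := hud.ne
  simp only [Walk.edges_cons, Walk.edges_nil, List.disjoint_cons_left, List.disjoint_nil_left,
    List.mem_cons, List.not_mem_nil, Sym2.eq_iff]
  grind

lemma link_degree_le_two [Fintype V] (h : ¬ HasEDC G 2) (u v : V) : (link G u).degree v ≤ 2 := by
  by_contra! hdeg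
  obtain ⟨a, ha, b, hb, c, hc, hab, hac, hbc⟩ := two_lt_card.1 hdeg
  rw [mem_neighborFinset] at ha hb hc
  obtain ⟨huv, hua, hva⟩ := ha
  obtain ⟨-, hub, hvb⟩ := hb
  obtain ⟨-, huc, hvc⟩ := hc
  refine h (hasEDC_two (isCycle_triangle huv hva hua.symm)
    (isCycle_quadrilateral hub hvb.symm hvc huc.symm huv.ne hbc) ?_)
  have := huv.ne; have := hua.ne; have := hub.ne; have := huc.ne
  have := hva.ne; have := hvb.ne; have := hvc.ne
  simp only [Walk.edges_cons, Walk.edges_nil, List.disjoint_cons_left, List.disjoint_nil_left,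
    List.mem_cons, List.not_mem_nil, Sym2.eq_iff]
  grind

/- Take `a` of maximum degree: an edge `bx` avoiding `a` and meeting an edge `ab` gives `b` degree
at least two, hence `a` a second neighbour, which can only be `x`. -/
lemma exists_support_subset_insert_neighborSet [Finite V] [Nonempty V]
    (h : ∀ {a b c d}, G.Adj a b → G.Adj c d → a = c ∨ a = d ∨ b = c ∨ b = d) :
    ∃ a, G.support ⊆ insert a (G.neighborSet a) := by
  have := Fintype.ofFinite V
  obtain ⟨a, ha⟩ := Finite.exists_max fun v ↦ G.degree v
  refine ⟨a, fun x ⟨y, hxy⟩ ↦ ?_⟩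
  simp only [Set.mem_insert_iff, mem_neighborSet]
  by_contra! hxa
  obtain ⟨b, hab⟩ : ∃ b, G.Adj a b := by
    rw [← G.degree_pos_iff_exists_adj]
    exact ((G.degree_pos_iff_exists_adj x).2 ⟨y, hxy⟩).trans_le (ha x)
  obtain rfl : b = y := by have := h hxy hab; have := hxy.symm; grind
  have hdeg : 1 < G.degree a := (one_lt_card.2
    ⟨x, by simpa using hxy.symm, a, by simpa using hab.symm, hxa.1⟩).trans_le (ha b)
  obtain ⟨c, hac, hcb⟩ := exists_mem_ne hdeg b
  rw [mem_neighborFinset] at hac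
  have := h hxy hac
  have := hab.ne
  grind

lemma exists_support_link_subset [Finite V] (h : ¬ HasEDC G 2) (u : V) :
    ∃ T : Finset V, #T ≤ 3 ∧ (link G u).support ⊆ T := by
  have := Fintype.ofFinite V
  have : Nonempty V := ⟨u⟩
  obtain ⟨a, ha⟩ := exists_support_subset_insert_neighborSet (eq_or_eq_of_link_adj h (u := u))
  refine ⟨insert a ((link G u).neighborFinset a), ?_, by simpa using ha⟩
  exact (card_insert_le _ _).trans (Nat.succ_le_succ (link_degree_le_two h u a))

lemma card_edgeFinset_le_of_isAcyclic [Fintype V] [Fintype G.edgeSet] (h : G.IsAcyclic) :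
    #G.edgeFinset ≤ Fintype.card V := by
  cases isEmpty_or_nonempty V
  · simp [Subsingleton.elim G ⊥]
  · obtain ⟨T, hGT, -, hT⟩ := connected_top.exists_isTree_le_of_le_of_isAcyclic le_top h
    calc #G.edgeFinset ≤ #T.edgeFinset := card_le_card (edgeFinset_mono hGT)
      _ ≤ Fintype.card V := hT.card_edgeFinset ▸ Nat.le_succ _

lemma isAcyclic_deleteEdges_of_isCycle (h : ¬ HasEDC G 2) {v : V} {c : G.Walk v v}
    (hc : c.IsCycle) : (G.deleteEdges {e | e ∈ c.edges}).IsAcyclic := by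
  intro w p hp
  refine h (hasEDC_two (hp.mapLe (deleteEdges_le _)) hc fun e hep hec ↦ ?_)
  rw [Walk.edges_mapLe_eq_edges] at hep
  have he := p.edges_subset_edgeSet hep
  rw [edgeSet_deleteEdges] at he
  exact he.2 hec

lemma card_edgeFinset_le_two_mul_card [Fintype V] [Fintype G.edgeSet] (h : ¬ HasEDC G 2) :
    #G.edgeFinset ≤ 2 * Fintype.card V := by
  by_cases hG : G.IsAcyclic
  · have := card_edgeFinset_le_of_isAcyclic hG
    omega
  simp only [IsAcyclic, not_forall, not_not] at hG
  obtain ⟨v, c, hc⟩ := hG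
  have hlen : #c.edges.toFinset ≤ Fintype.card V :=
    calc #c.edges.toFinset ≤ c.edges.length := c.edges.toFinset_card_le
      _ = c.support.tail.length := by simp
      _ ≤ Fintype.card V := hc.support_nodup.length_le_card
  have hcover : G.edgeFinset ⊆
      (G.deleteEdges {e | e ∈ c.edges}).edgeFinset ∪ c.edges.toFinset := fun e he ↦ by
    simp only [mem_edgeFinset, mem_union, edgeSet_deleteEdges, List.mem_toFinset, Set.mem_sdiff]
      at he ⊢
    tauto
  have hforest := card_edgeFinset_le_of_isAcyclic (isAcyclic_deleteEdges_of_isCycle h hc)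
  have := (card_le_card hcover).trans (card_union_le _ _)
  omega

lemma sum_card_inter_neighborFinset_le [Fintype V] (h : ¬ HasEDC G 2) (s : Finset V) :
    ∑ w ∈ s, #(s ∩ G.neighborFinset w) ≤ 4 * #s := by
  have hind : ¬ HasEDC (G.induce (s : Set V)) 2 := fun hs ↦
    h (hs.map (Embedding.induce (G := G) (s : Set V)).toHom (Embedding.induce (G := G) _).injective)
  have hdeg (w : (s : Set V)) : (G.induce (s : Set V)).degree w = #(s ∩ G.neighborFinset w) := by
    have hmap := map_neighborFinset_induce (G := G) w
    rw [Finset.toFinset_coe, inter_comm] at hmap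
    rw [← card_neighborFinset_eq_degree, ← hmap, card_map]
    congr!
  calc ∑ w ∈ s, #(s ∩ G.neighborFinset w)
      = ∑ w : (s : Set V), (G.induce (s : Set V)).degree w := by
        simp only [hdeg]
        exact (sum_coe_sort s fun w ↦ #(s ∩ G.neighborFinset w)).symm
    _ = 2 * #(G.induce (s : Set V)).edgeFinset := sum_degrees_eq_twice_card_edges _
    _ ≤ 2 * (2 * Fintype.card (s : Set V)) := by gcongr; exact card_edgeFinset_le_two_mul_card hind
    _ = 4 * #s := by simp; ring

end EdgeDisjointCycles

section PeakVertex

variable {V : Type*} [Fintype V] {G : SimpleGraph V}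

lemma card_inter_neighborFinset_eq_link_degree {u w : V} (huw : G.Adj u w) :
    #(G.neighborFinset u ∩ G.neighborFinset w) = (link G u).degree w := by
  rw [← card_neighborFinset_eq_degree]
  congr 1
  ext x
  simp [huw]

lemma sum_link_degree_le_six (h : ¬ HasEDC G 2) (u : V) : ∑ w, (link G u).degree w ≤ 6 := by
  obtain ⟨T, hT, hsupp⟩ := exists_support_link_subset h u
  have hzero (w : V) (hw : w ∉ T) : (link G u).degree w = 0 := by
    by_contra hdeg
    exact hw (hsupp (((link G u).degree_pos_iff_exists_adj w).1 (Nat.pos_of_ne_zero hdeg)))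
  calc ∑ w, (link G u).degree w = ∑ w ∈ T, (link G u).degree w :=
        (sum_subset (subset_univ T) fun w _ ↦ hzero w).symm
    _ ≤ #T * 2 := sum_le_card_nsmul _ _ _ fun w _ ↦ link_degree_le_two h u w
    _ ≤ 6 := Nat.mul_le_mul_right 2 hT

lemma card_erase_neighborFinset_le (h : ¬ HasEDC G 2) {u w : V} (huw : u ≠ w) :
    #((G.neighborFinset w).erase u) ≤ 3 + #(Gᶜ.neighborFinset u ∩ G.neighborFinset w) := by
  have hsub : (G.neighborFinset w).erase u ⊆
      G.neighborFinset u ∩ G.neighborFinset w ∪ Gᶜ.neighborFinset u ∩ G.neighborFinset w := by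
    intro x
    simp only [mem_erase, mem_union, mem_inter, mem_neighborFinset, compl_adj]
    tauto
  refine (card_le_card hsub).trans ((card_union_le _ _).trans ?_)
  exact Nat.add_le_add_right (card_inter_neighborFinset_le_three h huw) _

lemma sum_univ_eq_add_sum_neighborFinset {M : Type*} [AddCommMonoid M] (u : V) (g : V → M) :
    ∑ w, g w = g u + ∑ w ∈ G.neighborFinset u, g w + ∑ w ∈ Gᶜ.neighborFinset u, g w := by
  have hdisj : Disjoint (G.neighborFinset u) (Gᶜ.neighborFinset u) :=
    disjoint_left.2 fun w ↦ by simp +contextual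
  rw [add_assoc, ← sum_union hdisj, ← sum_insert (by simp)]
  congr 1
  ext w
  simp only [mem_univ, mem_insert, mem_union, mem_neighborFinset, compl_adj]
  tauto

lemma sq_mul_le_sum_card_inter {ρ : ℝ} {z : V → ℝ} (hρ : 0 ≤ ρ)
    (hz : ρ • z ≤ G.adjMatrix ℝ *ᵥ z) (u : V) :
    ρ ^ 2 * z u ≤ ∑ w, #(G.neighborFinset u ∩ G.neighborFinset w) * z w := by
  simp only [Pi.le_def, Pi.smul_apply, smul_eq_mul, adjMatrix_mulVec_apply] at hz
  calc ρ ^ 2 * z u = ρ * (ρ * z u) := by ring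
    _ ≤ ρ * ∑ x ∈ G.neighborFinset u, z x := by gcongr; exact hz u
    _ = ∑ x ∈ G.neighborFinset u, ρ * z x := mul_sum _ _ _
    _ ≤ ∑ x ∈ G.neighborFinset u, ∑ w ∈ G.neighborFinset x, z w := sum_le_sum fun x _ ↦ hz x
    _ = ∑ w, ∑ _ ∈ G.neighborFinset u ∩ G.neighborFinset w, z w :=
        sum_comm' fun _ _ ↦ by simp [adj_comm]
    _ = ∑ w, #(G.neighborFinset u ∩ G.neighborFinset w) * z w := by
        simp only [sum_const, nsmul_eq_mul]

/-- A nonnegative vector `z` with `ρ z ≤ A(G) z`, scaled so that its largest entry is `z u = 1`.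
The entrywise absolute value of an eigenvector for the spectral radius gives one for `ρ = ρ(G)`. -/
structure IsPeakedSubeigenvector (G : SimpleGraph V) (ρ : ℝ) (u : V) (z : V → ℝ) : Prop where
  nonneg : 0 ≤ z
  le_one : z ≤ 1
  apply_peak : z u = 1
  smul_le : ρ • z ≤ G.adjMatrix ℝ *ᵥ z

lemma exists_isPeakedSubeigenvector [Nonempty V] (G : SimpleGraph V) :
    ∃ u z, IsPeakedSubeigenvector G (specRad G) u z := by
  obtain ⟨f, hf, hGf⟩ := exists_adjMatrix_mulVec_eq_specRad_smul G
  obtain ⟨u, hu⟩ := Finite.exists_max |f|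
  have hpos : 0 < |f| u := by
    obtain ⟨v, hv⟩ := Function.ne_iff.1 hf
    exact (abs_pos.2 hv).trans_le (hu v)
  refine ⟨u, (|f| u)⁻¹ • |f|, ?_, ?_, inv_mul_cancel₀ hpos.ne', ?_⟩
  · exact smul_nonneg (inv_nonneg.2 hpos.le) (abs_nonneg f)
  · exact fun v ↦ inv_mul_le_one_of_le₀ (hu v) hpos.le
  · rw [smul_comm, mulVec_smul]
    exact smul_le_smul_of_nonneg_left (specRad_smul_abs_le hGf) (inv_nonneg.2 hpos.le)

namespace IsPeakedSubeigenvector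

variable {ρ M : ℝ} {u : V} {z : V → ℝ}

lemma mul_le_sum_neighborFinset (hz : IsPeakedSubeigenvector G ρ u z) (v : V) :
    ρ * z v ≤ ∑ w ∈ G.neighborFinset v, z w :=
  (hz.smul_le v).trans_eq (adjMatrix_mulVec_apply ..)

lemma sq_le (hz : IsPeakedSubeigenvector G ρ u z) (h : ¬ HasEDC G 2) (hρ : 0 ≤ ρ) (hM : 0 ≤ M)
    (hzM : ∀ w ≠ u, z w ≤ M) :
    ρ ^ 2 ≤ G.degree u + 6 * M + 3 * ∑ w ∈ Gᶜ.neighborFinset u, z w := by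
  have hlink : ∑ w ∈ G.neighborFinset u, #(G.neighborFinset u ∩ G.neighborFinset w) ≤ 6 :=
    calc _ = ∑ w ∈ G.neighborFinset u, (link G u).degree w := sum_congr rfl fun w hw ↦
          card_inter_neighborFinset_eq_link_degree ((mem_neighborFinset ..).1 hw)
      _ ≤ ∑ w, (link G u).degree w := sum_le_univ_sum_of_nonneg fun _ ↦ Nat.zero_le _
      _ ≤ 6 := sum_link_degree_le_six h u
  have hpeak := sq_mul_le_sum_card_inter hρ hz.smul_le u
  rw [sum_univ_eq_add_sum_neighborFinset (G := G) u, inter_self, card_neighborFinset_eq_degree,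
    hz.apply_peak, mul_one, mul_one] at hpeak
  refine hpeak.trans ?_
  gcongr
  · calc ∑ w ∈ G.neighborFinset u, #(G.neighborFinset u ∩ G.neighborFinset w) * z w
        ≤ ∑ w ∈ G.neighborFinset u, #(G.neighborFinset u ∩ G.neighborFinset w) * M := by
          gcongr with w hw
          exact hzM w ((mem_neighborFinset ..).1 hw).ne'
      _ ≤ 6 * M := by rw [← sum_mul]; gcongr; exact_mod_cast hlink
  · rw [mul_sum]
    gcongr with w hw
    · exact hz.nonneg w
    · exact_mod_cast card_inter_neighborFinset_le_three h ((mem_neighborFinset ..).1 hw).ne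

lemma mul_sum_compl_neighborFinset_le (hz : IsPeakedSubeigenvector G ρ u z) (h : ¬ HasEDC G 2)
    (hM : 0 ≤ M) (hzM : ∀ w ≠ u, z w ≤ M) :
    ρ * ∑ w ∈ Gᶜ.neighborFinset u, z w ≤ 7 * Gᶜ.degree u * M := by
  have hw {w : V} (hw : w ∈ Gᶜ.neighborFinset u) :
      ρ * z w ≤ (3 + #(Gᶜ.neighborFinset u ∩ G.neighborFinset w) : ℕ) * M := by
    obtain ⟨huw, hadj⟩ := (mem_neighborFinset ..).1 hw
    have hu : u ∉ G.neighborFinset w := by simpa [adj_comm] using hadj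
    have hcard := card_erase_neighborFinset_le h huw
    rw [erase_eq_of_notMem hu] at hcard
    calc ρ * z w ≤ ∑ x ∈ G.neighborFinset w, z x := hz.mul_le_sum_neighborFinset w
      _ ≤ #(G.neighborFinset w) * M := by
          rw [← nsmul_eq_mul]
          exact sum_le_card_nsmul _ _ _ fun x hx ↦ hzM x (ne_of_mem_of_not_mem hx hu)
      _ ≤ _ := by gcongr
  calc ρ * ∑ w ∈ Gᶜ.neighborFinset u, z w
      ≤ ∑ w ∈ Gᶜ.neighborFinset u, (3 + #(Gᶜ.neighborFinset u ∩ G.neighborFinset w) : ℕ) * M := by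
        rw [mul_sum]; exact sum_le_sum fun w ↦ hw
    _ = (3 * Gᶜ.degree u + ∑ w ∈ Gᶜ.neighborFinset u,
          #(Gᶜ.neighborFinset u ∩ G.neighborFinset w) : ℕ) * M := by
        rw [← sum_mul, ← Nat.cast_sum, sum_add_distrib, sum_const, card_neighborFinset_eq_degree,
          smul_eq_mul, mul_comm 3]
    _ ≤ (3 * Gᶜ.degree u + 4 * Gᶜ.degree u : ℕ) * M := by
        gcongr
        exact sum_card_inter_neighborFinset_le h _
    _ = 7 * Gᶜ.degree u * M := by push_cast; ring

lemma mul_compl_degree_le (hz : IsPeakedSubeigenvector G ρ u z) (h : ¬ HasEDC G 2) (hρ : 0 ≤ ρ)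
    (hM : 0 ≤ M) (hzM : ∀ w ≠ u, z w ≤ M) (hcard : Fintype.card V ≤ ρ ^ 2 + 1) :
    ρ * Gᶜ.degree u ≤ (6 * ρ + 21 * Gᶜ.degree u) * M := by
  have hdeg : (G.degree u + Gᶜ.degree u + 1 : ℝ) = Fintype.card V := by
    have := G.degree_lt_card_verts u
    have := G.degree_compl u
    norm_cast
    omega
  have hsq := hz.sq_le h hρ hM hzM
  have hsum := hz.mul_sum_compl_neighborFinset_le h hM hzM
  have hcompl : (Gᶜ.degree u : ℝ) ≤ 6 * M + 3 * ∑ w ∈ Gᶜ.neighborFinset u, z w := by linarith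
  linarith [mul_le_mul_of_nonneg_left hcompl hρ]

lemma mul_apply_le_of_ne_peak (hz : IsPeakedSubeigenvector G ρ u z) (h : ¬ HasEDC G 2)
    (hM : 0 ≤ M) (hzM : ∀ w ≠ u, z w ≤ M) {w : V} (hw : w ≠ u) :
    ρ * z w ≤ 1 + (3 + Gᶜ.degree u) * M := by
  calc ρ * z w ≤ ∑ x ∈ G.neighborFinset w, z x := hz.mul_le_sum_neighborFinset w
    _ ≤ ∑ x ∈ insert u ((G.neighborFinset w).erase u), z x :=
        sum_le_sum_of_subset_of_nonneg (insert_erase_subset _ _) fun x _ _ ↦ hz.nonneg x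
    _ = 1 + ∑ x ∈ (G.neighborFinset w).erase u, z x := by
        rw [sum_insert (notMem_erase u _), hz.apply_peak]
    _ ≤ 1 + #((G.neighborFinset w).erase u) * M := by
        rw [← nsmul_eq_mul]
        gcongr
        exact sum_le_card_nsmul _ _ _ fun x hx ↦ hzM x (ne_of_mem_erase hx)
    _ ≤ 1 + (3 + Gᶜ.degree u) * M := by
        gcongr
        have := (card_erase_neighborFinset_le h hw.symm).trans
          (Nat.add_le_add_left (card_le_card inter_subset_left) 3)
        exact_mod_cast this

-- The trivial bound `z ≤ 1` leaves `u` at most 20 non-neighbours; then all other entries of `z` are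
-- at most `1/7`, and with this bound the same estimate leaves none.
lemma compl_degree_eq_zero (hz : IsPeakedSubeigenvector G ρ u z) (h : ¬ HasEDC G 2) (hρ : 30 ≤ ρ)
    (hcard : Fintype.card V ≤ ρ ^ 2 + 1) : Gᶜ.degree u = 0 := by
  by_contra hdeg
  have hdeg_one : (1 : ℝ) ≤ Gᶜ.degree u := by exact_mod_cast Nat.one_le_iff_ne_zero.2 hdeg
  have hρ0 : 0 ≤ ρ := by linarith
  have hcoarse := hz.mul_compl_degree_le h hρ0 zero_le_one (fun w _ ↦ hz.le_one w) hcard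
  have hdeg_le : (Gᶜ.degree u : ℝ) ≤ 20 := by nlinarith
  obtain ⟨v, hv⟩ := (Gᶜ.degree_pos_iff_exists_adj u).1 (Nat.pos_of_ne_zero hdeg)
  obtain ⟨w, hwu, hw⟩ := exists_max_image (univ.erase u) z ⟨v, by simpa using hv.ne'⟩
  have hzw (x : V) (hx : x ≠ u) : z x ≤ z w := hw x (by simpa using hx)
  have hdecay := hz.mul_apply_le_of_ne_peak h (hz.nonneg w) hzw (by simpa using hwu)
  have hw_le : z w ≤ 1 / 7 := by nlinarith [hz.nonneg w]
  have hfine := hz.mul_compl_degree_le h hρ0 (by norm_num) (fun x hx ↦ (hzw x hx).trans hw_le) hcard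
  nlinarith

end IsPeakedSubeigenvector

end PeakVertex

section Join

variable {V W : Type*} {H : SimpleGraph W}

@[simp] lemma joinK1_adj_none_some (w : W) : (joinK1 H).Adj none (some w) := by
  simp [joinK1]

@[simp] lemma joinK1_adj_some_some {v w : W} : (joinK1 H).Adj (some v) (some w) ↔ H.Adj v w := by
  simpa [joinK1, H.adj_comm w v] using H.ne_of_adj

lemma joinK1_connected (H : SimpleGraph W) : (joinK1 H).Connected := by
  rw [connected_iff_exists_forall_reachable]
  refine ⟨none, fun
    | none => .rfl
    | some w => (joinK1_adj_none_some w).reachable⟩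

-- The test vector is the Perron vector of the star spanned by the apex.
lemma sqrt_card_le_specRad_joinK1 [Fintype W] (H : SimpleGraph W) :
    √(Fintype.card W) ≤ specRad (joinK1 H) := by
  set s := √(Fintype.card W : ℝ)
  let z : Option W → ℝ := (Option.elim · 1 fun _ ↦ s⁻¹)
  have hz : 0 ≤ z := Option.forall.2 ⟨zero_le_one, fun _ ↦ inv_nonneg.2 (Real.sqrt_nonneg _)⟩
  have hnone : (joinK1 H).neighborFinset none = univ.map .some := by
    ext (_ | w) <;> simp
  refine le_specRad_of_smul_le hz (fun h ↦ one_ne_zero (congrFun h none)) (Option.forall.2 ⟨?_, ?_⟩)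
  · rw [adjMatrix_mulVec_apply, hnone]
    have : s * 1 = Fintype.card W * s⁻¹ := by
      rw [← Real.mul_self_sqrt (Nat.cast_nonneg' (Fintype.card W)), mul_one, mul_self_mul_inv]
    simpa [z] using this.le
  · intro w
    rw [adjMatrix_mulVec_apply]
    calc s * s⁻¹ ≤ z none := mul_inv_le_one
      _ ≤ ∑ x ∈ (joinK1 H).neighborFinset (some w), z x :=
          single_le_sum (fun x _ ↦ hz x) (by simp [adj_comm])

lemma triPlusIsolated_adj {m : ℕ} {i j : Fin m} :
    (triPlusIsolated m).Adj i j ↔ i ≠ j ∧ i.val < 3 ∧ j.val < 3 := by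
  simp only [triPlusIsolated, fromRel_adj]
  tauto

lemma exists_equiv_fin_forall_mem_lt {α : Type*} [Fintype α] {m k : ℕ} (hα : Fintype.card α = m)
    {T : Finset α} (hT : #T ≤ k) : ∃ e : α ≃ Fin m, ∀ x ∈ T, (e x : ℕ) < k := by
  have hTm : #T ≤ m := hα ▸ card_le_univ T
  let e₀ := Fintype.equivFinOfCardEq hα
  let e₁ : {i : Fin m // e₀.symm i ∈ T} ≃ {i : Fin m // (i : ℕ) < #T} :=
    (e₀.symm.subtypeEquiv fun _ ↦ Iff.rfl).trans (T.equivFin.trans (Fin.castLEquiv hTm))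
  refine ⟨e₀.trans e₁.extendSubtype, fun x hx ↦ ?_⟩
  exact (e₁.extendSubtype_mem (e₀ x) (by simpa using hx)).trans_le hT

lemma exists_le_and_iso_joinK1_triPlusIsolated [Fintype V] {G : SimpleGraph V} {m : ℕ}
    (hcard : Fintype.card V = m + 1) {u : V} (hu : ∀ v ≠ u, G.Adj u v) {T : Finset V}
    (hT : #T ≤ 3) (hsupp : (link G u).support ⊆ T) :
    ∃ H, G ≤ H ∧ Nonempty (H ≃g joinK1 (triPlusIsolated m)) := by
  obtain ⟨e, he⟩ := exists_equiv_fin_forall_mem_lt (α := {v // v ≠ u}) (m := m) (by simp [hcard])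
    (T := T.subtype (· ≠ u)) ((card_subtype _ _).trans_le ((card_filter_le _ _).trans hT))
  let e' : V ≃ Option (Fin m) := (Equiv.optionSubtypeNe u).symm.trans (Equiv.optionCongr e)
  refine ⟨(joinK1 (triPlusIsolated m)).comap e', fun v w hvw ↦ ?_, ⟨Iso.comap e' _⟩⟩
  have he'_some {x : V} (hx : x ≠ u) : e' x = some (e ⟨x, hx⟩) := by
    simp [e', Equiv.optionSubtypeNe_symm_of_ne hx]
  have he'_none : e' u = none := by simp [e']
  rw [comap_adj]
  by_cases hv : v = u
  · subst hv
    rw [he'_none, he'_some hvw.ne']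
    exact joinK1_adj_none_some _
  by_cases hw : w = u
  · subst hw
    rw [he'_none, he'_some hvw.ne]
    exact (joinK1_adj_none_some _).symm
  have hlink : (link G u).Adj v w := ⟨hu v hv, hu w hw, hvw⟩
  rw [he'_some hv, he'_some hw, joinK1_adj_some_some, triPlusIsolated_adj]
  refine ⟨e.injective.ne (by simpa using hvw.ne), he _ ?_, he _ ?_⟩
  · exact mem_subtype.2 (hsupp ⟨w, hlink⟩)
  · exact mem_subtype.2 (hsupp ⟨v, hlink.symm⟩)

end Join

lemma exists_forall_adj_of_sqrt_le_specRad {V : Type*} [Fintype V] {G : SimpleGraph V}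
    (h : ¬ HasEDC G 2) {m : ℕ} (hcard : Fintype.card V = m + 1) (hm : 900 ≤ m)
    (hρ : √m ≤ specRad G) : ∃ u, ∀ v ≠ u, G.Adj u v := by
  have : Nonempty V := Fintype.card_pos_iff.1 (by omega)
  obtain ⟨u, z, hz⟩ := exists_isPeakedSubeigenvector G
  have hρ30 : 30 ≤ specRad G := (Real.le_sqrt' (by norm_num)).2 (by norm_cast) |>.trans hρ
  have hcard' : (Fintype.card V : ℝ) ≤ specRad G ^ 2 + 1 := by
    rw [hcard]
    push_cast
    gcongr
    exact (Real.sqrt_le_left (by linarith)).1 hρ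
  have hdeg := hz.compl_degree_eq_zero h hρ30 hcard'
  refine ⟨u, fun v hv ↦ by_contra fun hadj ↦ ?_⟩
  exact ((Gᶜ.degree_pos_iff_exists_adj u).2 ⟨v, hv.symm, hadj⟩).ne' hdeg

theorem spectral_extremal_k2_general (n : ℕ) (hn : 901 ≤ n) {V : Type*} [Fintype V]
    (hV : Fintype.card V = n) (G : SimpleGraph V) (hG : phi G ≤ 1) :
    specRad G ≤ specRad (joinK1 (triPlusIsolated (n - 1))) ∧
    (specRad G = specRad (joinK1 (triPlusIsolated (n - 1))) ↔
      Nonempty (G ≃g joinK1 (triPlusIsolated (n - 1)))) := by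
  obtain ⟨m, rfl⟩ := Nat.exists_eq_add_of_le' (Nat.one_le_of_lt hn)
  rw [Nat.add_sub_cancel]
  have h : ¬ HasEDC G 2 := fun h ↦ absurd (h.le_phi.trans hG) (by norm_num)
  have hiso (hle : specRad (joinK1 (triPlusIsolated m)) ≤ specRad G) :
      Nonempty (G ≃g joinK1 (triPlusIsolated m)) := by
    have hsqrt : √m ≤ specRad G := by
      simpa using (sqrt_card_le_specRad_joinK1 (triPlusIsolated m)).trans hle
    obtain ⟨u, hu⟩ := exists_forall_adj_of_sqrt_le_specRad h hV (by omega) hsqrt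
    obtain ⟨T, hT, hsupp⟩ := exists_support_link_subset h u
    obtain ⟨H, hGH, ⟨e⟩⟩ := exists_le_and_iso_joinK1_triPlusIsolated hV hu hT hsupp
    have hH : H.Connected := e.connected_iff.2 (joinK1_connected _)
    obtain rfl := eq_of_le_of_specRad_le hH hGH ((specRad_congr e).trans_le hle)
    exact ⟨e⟩
  have hcongr : Nonempty (G ≃g joinK1 (triPlusIsolated m)) →
      specRad G = specRad (joinK1 (triPlusIsolated m)) := fun ⟨e⟩ ↦ specRad_congr e
  refine ⟨?_, fun h ↦ hiso h.ge, hcongr⟩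
  by_contra! hlt
  exact hlt.ne' (hcongr (hiso hlt.le))

/-- For `n ≥ 4096`, `K₁ ∇ (K₃ ∪ (n-4)K₁)` is the unique graph (up to isomorphism)
maximizing the spectral radius among all `n`-vertex graphs without `2` pairwise
edge-disjoint cycles. -/
theorem spectral_extremal_k2 (n : ℕ) (hn : 4096 ≤ n) {V : Type*} [Fintype V]
    (hV : Fintype.card V = n) (G : SimpleGraph V) (hG : phi G ≤ 1) :
    specRad G ≤ specRad (joinK1 (triPlusIsolated (n - 1))) ∧
    (specRad G = specRad (joinK1 (triPlusIsolated (n - 1))) ↔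
      Nonempty (G ≃g joinK1 (triPlusIsolated (n - 1)))) :=
  spectral_extremal_k2_general n (by omega) hV G hG

end PaperEDC
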